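/- For every integer n ≥ 1, the first singular homology group with complex coefficients H₁(F_n; ℂ) of the affine curve F_n = {(y,z) ∈ ℂ² : yⁿ + zⁿ = 1} is a ℂ-vector space of dimension (n−1)². -/

import Mathlib

/-!
Over a field the dimension of `H₁` is that of `H¹`, and a `1`-cocycle is a function on paths which
vanishes on boundaries of triangles, that is, an additive and homotopy invariant function on paths.
Such a function has a primitive on every simply connected set.

At a point of the curve `Re yⁿ` or `Re zⁿ` is positive. The set where `Re yⁿ` is positive falls into
`n` simply connected pieces, according to the branch of `(yⁿ)^(1/n)` that equals `y`, and likewise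
for `z`; a piece of the first kind meets a piece of the second kind in a path connected set. Hence
the nerve of this cover is the complete bipartite graph on `n + n` vertices, and `H¹` is the space
of functions on its `n²` edges modulo sums `u i + v j`, of dimension `(n - 1)²`.
-/

open CategoryTheory AlgebraicTopology

/-- First singular homology with complex coefficients, as a functor
`TopCat ⥤ ModuleCat ℂ`: the singular simplicial set, followed by the free
`ℂ`-module functor, the alternating face map (singular chain) complex, and
homology in degree `1`. -/
noncomputable def H1 : TopCat ⥤ ModuleCat ℂ :=
  TopCat.toSSet ⋙ ((SimplicialObject.whiskering _ _).obj (ModuleCat.free ℂ)) ⋙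
    alternatingFaceMapComplex (ModuleCat ℂ) ⋙
    HomologicalComplex.homologyFunctor (ModuleCat ℂ) (ComplexShape.down ℕ) 1

/-- The Milnor fibre `F_n = {(y,z) ∈ ℂ² : yⁿ + zⁿ = 1}` of `yⁿ + zⁿ`. -/
abbrev FermatFibre (n : ℕ) : Type :=
  {v : ℂ × ℂ // v.1 ^ n + v.2 ^ n = 1}

open Module unitInterval
open scoped Topology

section ChainComplexes

variable {k : Type*} [Field k]

theorem finrank_quotient_submoduleOf_eq_dual {V W : Type*} [AddCommGroup V] [Module k V]
    [AddCommGroup W] [Module k W] (e : W ≃ₗ[k] Dual k V) (Z B : Submodule k V) :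
    finrank k (Z ⧸ B.submoduleOf Z) =
      finrank k (B.dualAnnihilator.comap e.toLinearMap ⧸
        (Z.dualAnnihilator.comap e.toLinearMap).submoduleOf
          (B.dualAnnihilator.comap e.toLinearMap)) := by
  let ι : (Z ⧸ B.submoduleOf Z) →ₗ[k] V ⧸ B := (B.submoduleOf Z).mapQ B Z.subtype le_rfl
  have hι : Function.Injective ι := by
    rw [← LinearMap.ker_eq_bot, LinearMap.ker_eq_bot']
    rintro ⟨z⟩ hz
    exact (Submodule.Quotient.mk_eq_zero _).2 ((Submodule.Quotient.mk_eq_zero B).1 hz)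
  let Θ : B.dualAnnihilator.comap e.toLinearMap →ₗ[k] Dual k (Z ⧸ B.submoduleOf Z) :=
    ι.dualMap ∘ₗ B.dualQuotEquivDualAnnihilator.symm.toLinearMap ∘ₗ
      (e.ofSubmodule' B.dualAnnihilator).toLinearMap
  have hΘ : Function.Surjective Θ :=
    (LinearMap.dualMap_surjective_of_injective hι).comp
      (B.dualQuotEquivDualAnnihilator.symm.surjective.comp
        (e.ofSubmodule' B.dualAnnihilator).surjective)
  have hker : LinearMap.ker Θ = (Z.dualAnnihilator.comap e.toLinearMap).submoduleOf _ := by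
    ext φ
    change Θ φ = 0 ↔ e φ ∈ Z.dualAnnihilator
    rw [Submodule.mem_dualAnnihilator]
    exact ⟨fun h z hz ↦ LinearMap.congr_fun h (Submodule.Quotient.mk ⟨z, hz⟩),
      fun h ↦ Submodule.linearMap_qext _ (LinearMap.ext fun z ↦ h z z.2)⟩
  rw [← hker, (Θ.quotKerEquivOfSurjective hΘ).finrank_eq, Subspace.dual_finrank_eq]

theorem finrank_homology_eq {R : Type*} [CommRing R] {ι : Type*} {c : ComplexShape ι}
    (K : HomologicalComplex (ModuleCat R) c) {i j l : ι} (hi : c.prev j = i) (hl : c.next j = l) :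
    finrank R (K.homology j) =
      finrank R (LinearMap.ker (K.d j l).hom ⧸
        (LinearMap.range (K.d i j).hom).submoduleOf (LinearMap.ker (K.d j l).hom)) := by
  let S := K.sc' i j l
  have hrange : LinearMap.range S.moduleCatToCycles =
      (LinearMap.range S.f.hom).submoduleOf (LinearMap.ker S.g.hom) := by
    ext z
    exact ⟨fun ⟨y, hy⟩ ↦ ⟨y, congrArg Subtype.val hy⟩, fun ⟨y, hy⟩ ↦ ⟨y, Subtype.ext hy⟩⟩
  rw [(K.homologyIsoSc' i j l hi hl ≪≫ S.moduleCatHomologyIso).toLinearEquiv.finrank_eq]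
  exact ((Submodule.quotEquivOfEq _ _ hrange)).finrank_eq

end ChainComplexes

section SimplicialChains

open Simplicial

universe u

variable (k : Type u) [CommRing k] (S : SSet.{u})

/-- The boundary map of the simplicial chains of `S` with coefficients in `k`, chains being finitely
supported functions on simplices. -/
noncomputable def simplicialBoundary (n : ℕ) : (S _⦋n + 1⦌ →₀ k) →ₗ[k] (S _⦋n⦌ →₀ k) :=
  ∑ i : Fin (n + 2), (-1 : ℤ) ^ (i : ℕ) • Finsupp.lmapDomain k k (S.δ i)

theorem hom_alternatingFaceMapComplex_d (n : ℕ) :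
    (((alternatingFaceMapComplex (ModuleCat k)).obj
      (((SimplicialObject.whiskering _ _).obj (ModuleCat.free k)).obj S)).d (n + 1) n).hom =
        simplicialBoundary k S n := by
  rw [alternatingFaceMapComplex_obj_d, AlternatingFaceMapComplex.objD, ModuleCat.hom_sum]
  rfl

variable {k S}

theorem mem_dualAnnihilator_range_simplicialBoundary (φ : Dual k (S _⦋1⦌ →₀ k)) :
    φ ∈ (LinearMap.range (simplicialBoundary k S 1)).dualAnnihilator ↔
      ∀ τ : S _⦋2⦌, φ (Finsupp.single (S.δ 2 τ) 1) + φ (Finsupp.single (S.δ 0 τ) 1) =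
        φ (Finsupp.single (S.δ 1 τ) 1) := by
  have hsingle (τ : S _⦋2⦌) : φ (simplicialBoundary k S 1 (Finsupp.single τ 1)) =
      φ (Finsupp.single (S.δ 2 τ) 1) + φ (Finsupp.single (S.δ 0 τ) 1) -
        φ (Finsupp.single (S.δ 1 τ) 1) := by
    simp only [Nat.reduceAdd, simplicialBoundary, Int.reduceNeg, Fin.sum_univ_three, Fin.isValue,
      Fin.coe_ofNat_eq_mod, Nat.zero_mod, pow_zero, one_smul, Nat.one_mod, pow_one, neg_smul,
      Nat.mod_succ, even_two, Even.neg_pow, one_pow, LinearMap.add_apply, Finsupp.lmapDomain_apply,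
      Finsupp.mapDomain_single, LinearMap.neg_apply, map_add, map_neg]
    abel
  rw [← LinearMap.ker_dualMap_eq_dualAnnihilator_range, LinearMap.mem_ker]
  refine ⟨fun h τ ↦ sub_eq_zero.1 ((hsingle τ).symm.trans (LinearMap.congr_fun h _)), fun h ↦ ?_⟩
  exact Finsupp.lhom_ext' fun τ ↦ LinearMap.ext_ring ((hsingle τ).trans (sub_eq_zero.2 (h τ)))

theorem mem_dualAnnihilator_ker_simplicialBoundary {k : Type u} [Field k]
    (φ : Dual k (S _⦋1⦌ →₀ k)) :
    φ ∈ (LinearMap.ker (simplicialBoundary k S 0)).dualAnnihilator ↔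
      ∃ g : S _⦋0⦌ → k, ∀ s : S _⦋1⦌, φ (Finsupp.single s 1) = g (S.δ 0 s) - g (S.δ 1 s) := by
  have hsingle (ψ : Dual k (S _⦋0⦌ →₀ k)) (s : S _⦋1⦌) :
      ψ (simplicialBoundary k S 0 (Finsupp.single s 1)) =
        ψ (Finsupp.single (S.δ 0 s) 1) - ψ (Finsupp.single (S.δ 1 s) 1) := by
    simp [simplicialBoundary, sub_eq_add_neg]
  rw [← LinearMap.range_dualMap_eq_dualAnnihilator_ker]
  constructor
  · rintro ⟨ψ, rfl⟩
    exact ⟨fun x ↦ ψ (Finsupp.single x 1), hsingle ψ⟩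
  · rintro ⟨g, hg⟩
    refine ⟨Finsupp.llift k k k _ g, Finsupp.lhom_ext' fun s ↦ LinearMap.ext_ring ?_⟩
    refine ((hsingle (Finsupp.llift k k k _ g) s).trans ?_).trans (hg s).symm
    simp

end SimplicialChains

section PathCochains

open Simplicial

universe u

/-- The path along an edge of the standard `2`-simplex, from its `i`-th to its `j`-th vertex. -/
noncomputable def simplexEdge (i j : Fin 3) :
    Path (stdSimplex.vertex i : stdSimplex ℝ (Fin 3)) (stdSimplex.vertex j) where
  toFun t := stdSimplex.map ![i, j] (stdSimplexHomeomorphUnitInterval.symm t)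
  continuous_toFun := (stdSimplex.continuous_map _).comp (Homeomorph.continuous _)
  source' := by
    rw [← stdSimplexHomeomorphUnitInterval_zero, Homeomorph.symm_apply_apply]
    exact stdSimplex.map_vertex ![i, j] 0
  target' := by
    rw [← stdSimplexHomeomorphUnitInterval_one, Homeomorph.symm_apply_apply]
    exact stdSimplex.map_vertex ![i, j] 1

/-- A function on paths which is a singular `1`-cocycle: its values along the edges of any singular
`2`-simplex add up. -/
def IsPathCocycle {X M : Type*} [TopologicalSpace X] [Add M] (F : C(I, X) → M) : Prop :=
  ∀ τ : C(stdSimplex ℝ (Fin 3), X),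
    F (τ.comp (simplexEdge 0 1)) + F (τ.comp (simplexEdge 1 2)) = F (τ.comp (simplexEdge 0 2))

section

variable (k : Type*) [CommRing k] (X : Type*) [TopologicalSpace X]

/-- The singular `1`-cocycles of `X` with coefficients in `k`, as functions on paths. -/
def pathCocycles : Submodule k (C(I, X) → k) where
  carrier := {F | IsPathCocycle F}
  add_mem' hF hG τ := by
    simp only [Pi.add_apply, ← hF τ, ← hG τ]
    ring
  zero_mem' _ := add_zero 0
  smul_mem' c F hF τ := by simp only [Pi.smul_apply, ← hF τ, smul_add]

/-- The singular `1`-coboundaries of `X` with coefficients in `k`, as functions on paths. -/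
def pathCoboundaries : Submodule k (C(I, X) → k) where
  carrier := {F | ∃ g : X → k, ∀ γ, F γ = g (γ 1) - g (γ 0)}
  add_mem' := by
    rintro F G ⟨f, hf⟩ ⟨g, hg⟩
    refine ⟨f + g, fun γ ↦ ?_⟩
    simp only [Pi.add_apply, hf, hg]
    ring
  zero_mem' := ⟨0, fun _ ↦ (sub_self 0).symm⟩
  smul_mem' := by
    rintro c F ⟨f, hf⟩
    exact ⟨c • f, fun γ ↦ by simp only [Pi.smul_apply, hf, smul_sub]⟩

end

variable (X : Type u) [TopologicalSpace X]

/-- Singular `1`-simplices are paths. -/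
noncomputable def singularPathEquiv : TopCat.toSSet.obj (TopCat.of X) _⦋1⦌ ≃ C(I, X) :=
  TopCat.toSSetObj₁Equiv.trans
    (ConcreteCategory.homEquiv.trans (TopCat.I.homeomorph.continuousMapCongr (.refl X)))

variable {X}

theorem singularPathEquiv_zero (s : TopCat.toSSet.obj (TopCat.of X) _⦋1⦌) :
    singularPathEquiv X s 0 =
      TopCat.toSSetObj₀Equiv ((TopCat.toSSet.obj (TopCat.of X)).δ 1 s) :=
  TopCat.toSSetObj₁Equiv_apply_zero s

theorem singularPathEquiv_one (s : TopCat.toSSet.obj (TopCat.of X) _⦋1⦌) :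
    singularPathEquiv X s 1 =
      TopCat.toSSetObj₀Equiv ((TopCat.toSSet.obj (TopCat.of X)).δ 0 s) :=
  TopCat.toSSetObj₁Equiv_apply_one s

theorem singularPathEquiv_face (i : Fin 3) (τ : TopCat.toSSet.obj (TopCat.of X) _⦋2⦌) :
    singularPathEquiv X ((TopCat.toSSet.obj (TopCat.of X)).δ i τ) =
      (TopCat.toSSetObjEquiv (TopCat.of X) _ τ).comp
        (simplexEdge (i.succAbove 0) (i.succAbove 1)) := by
  have hface : (SimplexCategory.δ i : Fin 2 → Fin 3) = ![i.succAbove 0, i.succAbove 1] :=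
    funext (Fin.forall_fin_two.2 ⟨rfl, rfl⟩)
  ext t
  change TopCat.toSSetObjEquiv (TopCat.of X) _ τ
    (stdSimplex.map (SimplexCategory.δ i : Fin 2 → Fin 3)
      (stdSimplexHomeomorphUnitInterval.symm t)) = _
  rw [hface]
  rfl

theorem isPathCocycle_iff_faces {M : Type*} [Add M] (F : C(I, X) → M) :
    IsPathCocycle F ↔ ∀ τ : TopCat.toSSet.obj (TopCat.of X) _⦋2⦌,
      F (singularPathEquiv X ((TopCat.toSSet.obj (TopCat.of X)).δ 2 τ)) +
        F (singularPathEquiv X ((TopCat.toSSet.obj (TopCat.of X)).δ 0 τ)) =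
          F (singularPathEquiv X ((TopCat.toSSet.obj (TopCat.of X)).δ 1 τ)) := by
  simp only [singularPathEquiv_face]
  refine ⟨fun h τ ↦ h (TopCat.toSSetObjEquiv (TopCat.of X) _ τ), fun h τ ↦ ?_⟩
  have hτ := h ((TopCat.toSSetObjEquiv (TopCat.of X) (.op ⦋2⦌)).symm τ)
  rwa [Equiv.apply_symm_apply] at hτ

theorem mem_pathCoboundaries_iff_faces {k : Type*} [CommRing k] (F : C(I, X) → k) :
    F ∈ pathCoboundaries k X ↔ ∃ g : TopCat.toSSet.obj (TopCat.of X) _⦋0⦌ → k, ∀ s,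
      F (singularPathEquiv X s) = g ((TopCat.toSSet.obj (TopCat.of X)).δ 0 s) -
        g ((TopCat.toSSet.obj (TopCat.of X)).δ 1 s) := by
  constructor
  · rintro ⟨g, hg⟩
    refine ⟨fun x ↦ g (TopCat.toSSetObj₀Equiv x), fun s ↦ ?_⟩
    rw [hg, singularPathEquiv_zero, singularPathEquiv_one]
  · rintro ⟨g, hg⟩
    refine ⟨fun x ↦ g (TopCat.toSSetObj₀Equiv.symm x), fun γ ↦ ?_⟩
    obtain ⟨s, rfl⟩ := (singularPathEquiv X).surjective γ
    simp only [hg, singularPathEquiv_zero, singularPathEquiv_one, Equiv.symm_apply_apply]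

theorem finrank_H1_eq_finrank_pathCocycles_quotient (X : Type) [TopologicalSpace X] :
    finrank ℂ (H1.obj (TopCat.of X)) =
      finrank ℂ (pathCocycles ℂ X ⧸ (pathCoboundaries ℂ X).submoduleOf (pathCocycles ℂ X)) := by
  let S := TopCat.toSSet.obj (TopCat.of X)
  let e : (C(I, X) → ℂ) ≃ₗ[ℂ] Dual ℂ (S _⦋1⦌ →₀ ℂ) :=
    LinearEquiv.funCongrLeft ℂ ℂ (singularPathEquiv X) ≪≫ₗ Finsupp.llift ℂ ℂ ℂ (S _⦋1⦌)
  have e_single (F s) : e F (Finsupp.single s 1) = F (singularPathEquiv X s) := by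
    simp [e]
  have hcocycles : (LinearMap.range (simplicialBoundary ℂ S 1)).dualAnnihilator.comap
      e.toLinearMap = pathCocycles ℂ X := by
    ext F
    refine (mem_dualAnnihilator_range_simplicialBoundary _).trans ?_
    simp only [LinearEquiv.coe_coe, e_single]
    exact (isPathCocycle_iff_faces F).symm
  have hcoboundaries : (LinearMap.ker (simplicialBoundary ℂ S 0)).dualAnnihilator.comap
      e.toLinearMap = pathCoboundaries ℂ X := by
    ext F
    refine (mem_dualAnnihilator_ker_simplicialBoundary _).trans ?_
    simp only [LinearEquiv.coe_coe, e_single]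
    exact (mem_pathCoboundaries_iff_faces F).symm
  rw [← hcocycles, ← hcoboundaries, ← finrank_quotient_submoduleOf_eq_dual,
    ← hom_alternatingFaceMapComplex_d, ← hom_alternatingFaceMapComplex_d]
  exact finrank_homology_eq _ (by simp) (by simp)

end PathCochains

section Homotopy

variable {X M : Type*} [TopologicalSpace X] [AddCommGroup M] {F : C(I, X) → M} {x y z : X}

theorem sum_simplexEdge_smul {E : Type*} [AddCommGroup E] [Module ℝ E] (p : Fin 3 → E)
    (i j : Fin 3) (t : I) :
    ∑ l, simplexEdge i j t l • p l = AffineMap.lineMap (p i) (p j) (t : ℝ) := by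
  have hcoord (l : Fin 3) : simplexEdge i j t l =
      (if i = l then 1 - (t : ℝ) else 0) + if j = l then (t : ℝ) else 0 := by
    change FunOnFinite.linearMap ℝ ℝ ![i, j] _ l = _
    rw [FunOnFinite.linearMap_apply_apply, Finset.sum_filter, Fin.sum_univ_two]
    rfl
  simp [hcoord, AffineMap.lineMap_apply_module, add_smul, Finset.sum_add_distrib]

namespace IsPathCocycle

theorem map_segment_add_map_segment (hF : IsPathCocycle F) {E : Type*} [AddCommGroup E] [Module ℝ E]
    [TopologicalSpace E] [IsTopologicalAddGroup E] [ContinuousSMul ℝ E] (H : C(E, X)) (a b c : E) :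
    F (H.comp (Path.segment a b)) + F (H.comp (Path.segment b c)) =
      F (H.comp (Path.segment a c)) := by
  let T : C(stdSimplex ℝ (Fin 3), E) :=
    ⟨fun s ↦ ∑ i, s i • ![a, b, c] i, by
      have hcoord (i : Fin 3) : Continuous fun s : stdSimplex ℝ (Fin 3) ↦ s i :=
        (continuous_apply i).comp continuous_subtype_val
      exact continuous_finsetSum _ fun i _ ↦ (hcoord i).smul continuous_const⟩
  have hT (i j : Fin 3) : T.comp (simplexEdge i j) =
      (Path.segment (![a, b, c] i) (![a, b, c] j) : C(I, E)) := by
    ext t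
    exact sum_simplexEdge_smul _ i j t
  have hH := hF (H.comp T)
  rwa [ContinuousMap.comp_assoc, ContinuousMap.comp_assoc, ContinuousMap.comp_assoc, hT, hT,
    hT] at hH

theorem map_const (hF : IsPathCocycle F) (x : X) : F (ContinuousMap.const I x) = 0 := by
  simpa using hF (ContinuousMap.const _ x)

theorem map_trans (hF : IsPathCocycle F) (γ : Path x y) (γ' : Path y z) :
    F (γ.trans γ') = F γ + F γ' := by
  let H : C(ℝ, X) := ⟨(γ.trans γ').extend, (γ.trans γ').continuous_extend⟩
  have hwhole : H.comp (Path.segment (0 : ℝ) 1) = (γ.trans γ' : C(I, X)) := by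
    ext t
    simp [H, AffineMap.lineMap_apply]
  have hleft : H.comp (Path.segment (0 : ℝ) (1 / 2)) = (γ : C(I, X)) := by
    ext t
    have hpoint : Path.segment (0 : ℝ) (1 / 2) t = t / 2 := by
      simp [AffineMap.lineMap_apply, div_eq_mul_inv]
    have hle : (t : ℝ) / 2 ≤ 1 / 2 := by linarith [t.2.2]
    refine (congrArg H hpoint).trans ((Path.extend_trans_of_le_half γ γ' hle).trans ?_)
    rw [mul_div_cancel₀ _ two_ne_zero, Path.extend_extends']
    rfl
  have hright : H.comp (Path.segment (1 / 2 : ℝ) 1) = (γ' : C(I, X)) := by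
    ext t
    have hpoint : Path.segment (1 / 2 : ℝ) 1 t = (1 + t) / 2 := by
      simp only [Path.segment_apply, AffineMap.lineMap_apply, vsub_eq_sub, smul_eq_mul, vadd_eq_add]
      ring
    have hle : 1 / 2 ≤ (1 + (t : ℝ)) / 2 := by linarith [t.2.1]
    refine (congrArg H hpoint).trans ((Path.extend_trans_of_half_le γ γ' hle).trans ?_)
    rw [mul_div_cancel₀ _ two_ne_zero, add_sub_cancel_left, Path.extend_extends']
    rfl
  rw [← hleft, ← hright, ← hwhole, hF.map_segment_add_map_segment]

theorem map_eq_of_homotopic (hF : IsPathCocycle F) {γ γ' : Path x y} (h : γ.Homotopic γ') :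
    F γ = F γ' := by
  obtain ⟨h⟩ := h
  let H : C(ℝ × ℝ, X) := h.toContinuousMap.comp
    ⟨fun p ↦ (Set.projIcc 0 1 zero_le_one p.1, Set.projIcc 0 1 zero_le_one p.2), by fun_prop⟩
  have hbottom : H.comp (Path.segment ((0, 0) : ℝ × ℝ) (0, 1)) = (γ : C(I, X)) := by
    ext
    simp [H, AffineMap.lineMap_apply]
  have htop : H.comp (Path.segment ((1, 0) : ℝ × ℝ) (1, 1)) = (γ' : C(I, X)) := by
    ext
    simp [H, AffineMap.lineMap_apply]
  have hleft : H.comp (Path.segment ((0, 0) : ℝ × ℝ) (1, 0)) = ContinuousMap.const I x := by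
    ext
    simp [H, AffineMap.lineMap_apply]
  have hright : H.comp (Path.segment ((0, 1) : ℝ × ℝ) (1, 1)) = ContinuousMap.const I y := by
    ext
    simp [H, AffineMap.lineMap_apply]
  have hupper := hF.map_segment_add_map_segment H (0, 0) (0, 1) (1, 1)
  have hlower := hF.map_segment_add_map_segment H (0, 0) (1, 0) (1, 1)
  rw [hbottom, hright, hF.map_const, add_zero] at hupper
  rw [htop, hleft, hF.map_const, zero_add] at hlower
  exact hupper.trans hlower.symm

end IsPathCocycle

theorem isPathCocycle_of_map_trans_of_homotopic
    (htrans : ∀ {x y z : X} (γ : Path x y) (γ' : Path y z), F (γ.trans γ') = F γ + F γ')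
    (hhomotopic : ∀ {x y : X} {γ γ' : Path x y}, γ.Homotopic γ' → F γ = F γ') :
    IsPathCocycle F := by
  intro τ
  have : ContractibleSpace (stdSimplex ℝ (Fin 3)) :=
    (convex_stdSimplex ℝ (Fin 3)).contractibleSpace ⟨_, single_mem_stdSimplex ℝ 0⟩
  have hsimplex : ((simplexEdge 0 1).trans (simplexEdge 1 2)).Homotopic (simplexEdge 0 2) :=
    SimplyConnectedSpace.paths_homotopic _ _
  have hτ := hhomotopic (hsimplex.map τ)
  rw [Path.map_trans, htrans] at hτ
  exact hτ

end Homotopy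

section Primitives

variable {X M : Type*} [TopologicalSpace X] [AddCommGroup M] {F : C(I, X) → M} {U : Set X}

/-- `g` is a primitive of the path function `F` on `U`: along every path in `U`, the value of `F` is
the increment of `g`. -/
def IsPrimitiveOn (g : X → M) (F : C(I, X) → M) (U : Set X) : Prop :=
  ∀ γ : C(I, X), (∀ t, γ t ∈ U) → F γ = g (γ 1) - g (γ 0)

theorem IsPrimitiveOn.map_path {g : X → M} (hg : IsPrimitiveOn g F U) {x y : X} (γ : Path x y)
    (hγ : ∀ t, γ t ∈ U) : F γ = g y - g x := by
  simpa using hg γ hγ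

theorem IsPrimitiveOn.sub_const {g : X → M} (hg : IsPrimitiveOn g F U) (m : M) :
    IsPrimitiveOn (fun x ↦ g x - m) F U := fun γ hγ ↦ by
  rw [hg γ hγ, sub_sub_sub_cancel_right]

theorem IsPrimitiveOn.mono {g : X → M} (hg : IsPrimitiveOn g F U) {V : Set X} (hVU : V ⊆ U) :
    IsPrimitiveOn g F V :=
  fun γ hγ ↦ hg γ fun t ↦ hVU (hγ t)

theorem IsPrimitiveOn.sub_eq_sub {f g : X → M} (hf : IsPrimitiveOn f F U)
    (hg : IsPrimitiveOn g F U) (hU : IsPathConnected U) {x y : X} (hx : x ∈ U) (hy : y ∈ U) :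
    f x - g x = f y - g y := by
  obtain ⟨γ, hγ⟩ := hU.joinedIn y hy x hx
  rw [← sub_eq_zero, sub_sub_sub_comm, sub_eq_zero, ← hf.map_path γ hγ, ← hg.map_path γ hγ]

namespace IsPathCocycle

theorem map_subpath_add_map_subpath (hF : IsPathCocycle F) {x y : X} (γ : Path x y)
    (r s t : I) : F (γ.subpath r s) + F (γ.subpath s t) = F (γ.subpath r t) := by
  rw [← hF.map_trans]
  exact hF.map_eq_of_homotopic ⟨Path.Homotopy.subpathTransSubpath γ r s t⟩

theorem eq_zero_of_openCover (hF : IsPathCocycle F) {ι : Type*} {U : ι → Set X}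
    (hopen : ∀ i, IsOpen (U i)) (hcover : ⋃ i, U i = Set.univ)
    (hzero : ∀ i, ∀ γ : C(I, X), (∀ t, γ t ∈ U i) → F γ = 0) (γ : C(I, X)) : F γ = 0 := by
  let p : Path (γ 0) (γ 1) := ⟨γ, rfl, rfl⟩
  have hconst : IsLocallyConstant fun t ↦ F (p.subpath 0 t) := by
    refine (IsLocallyConstant.iff_eventually_eq _).2 fun t ↦ ?_
    obtain ⟨i, hi⟩ := Set.iUnion_eq_univ_iff.1 hcover (γ t)
    have hsmall : ∀ᶠ s in 𝓝 t, Set.uIcc t s ⊆ γ ⁻¹' U i :=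
      Filter.tendsto_smallSets_iff.1 (tendsto_const_nhds.uIcc Filter.tendsto_id) _
        (((hopen i).preimage γ.continuous).mem_nhds hi)
    filter_upwards [hsmall] with s hs
    have hrange : Set.range (p.subpath t s) ⊆ U i := by
      rw [Path.range_subpath]
      exact Set.image_subset_iff.2 hs
    rw [← hF.map_subpath_add_map_subpath p 0 t s,
      hzero i (p.subpath t s : C(I, X)) fun u ↦ hrange (Set.mem_range_self u), add_zero]
  have hends := hconst.apply_eq_of_preconnectedSpace 1 0
  rw [Path.subpath_self, Path.subpath_zero_one] at hends
  exact hends.trans (hF.map_const _)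

theorem exists_isPrimitiveOn (hF : IsPathCocycle F) (hU : IsSimplyConnected U) :
    ∃ g, IsPrimitiveOn g F U := by
  have := hU.simplyConnectedSpace
  obtain ⟨x₀, hx₀⟩ := hU.nonempty
  let p (x : U) : Path (⟨x₀, hx₀⟩ : U) x := PathConnectedSpace.somePath _ x
  classical
  refine ⟨fun x ↦ if hx : x ∈ U then F ((p ⟨x, hx⟩).map continuous_subtype_val) else 0,
    fun γ hγ ↦ ?_⟩
  let q : Path (⟨γ 0, hγ 0⟩ : U) ⟨γ 1, hγ 1⟩ :=
    ⟨⟨fun t ↦ ⟨γ t, hγ t⟩, by fun_prop⟩, rfl, rfl⟩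
  have hpq : ((p _).trans q).Homotopic (p _) := SimplyConnectedSpace.paths_homotopic _ _
  have hF_pq := hF.map_eq_of_homotopic (hpq.map ⟨_, continuous_subtype_val⟩)
  rw [Path.map_trans, hF.map_trans] at hF_pq
  beta_reduce
  rw [dif_pos (hγ 0), dif_pos (hγ 1)]
  exact eq_sub_of_add_eq' hF_pq

theorem sub_increment (hF : IsPathCocycle F) (g : X → M) :
    IsPathCocycle fun γ ↦ F γ - (g (γ 1) - g (γ 0)) := by
  intro τ
  simp only [← hF τ, ContinuousMap.comp_apply, ContinuousMap.coe_mk, Path.source, Path.target]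
  abel

theorem isPrimitiveOn_univ_of_openCover (hF : IsPathCocycle F) {ι : Type*} {U : ι → Set X}
    (hopen : ∀ i, IsOpen (U i)) (hcover : ⋃ i, U i = Set.univ) {g : X → M}
    (hg : ∀ i, IsPrimitiveOn g F (U i)) : IsPrimitiveOn g F Set.univ := fun γ _ ↦
  sub_eq_zero.1 <| (hF.sub_increment g).eq_zero_of_openCover hopen hcover
    (fun i γ hγ ↦ sub_eq_zero.2 (hg i γ hγ)) γ

theorem exists_isPrimitiveOn_univ_of_openCover (hF : IsPathCocycle F) {ι : Type*}
    {U : ι → Set X} (hopen : ∀ i, IsOpen (U i)) (hcover : ⋃ i, U i = Set.univ) {g : ι → X → M}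
    (hg : ∀ i, IsPrimitiveOn (g i) F (U i))
    (hagree : ∀ i j, Set.EqOn (g i) (g j) (U i ∩ U j)) : ∃ f, IsPrimitiveOn f F Set.univ := by
  choose i hi using Set.iUnion_eq_univ_iff.1 hcover
  refine ⟨fun x ↦ g (i x) x, hF.isPrimitiveOn_univ_of_openCover hopen hcover fun j γ hγ ↦ ?_⟩
  rw [hg j γ hγ, hagree j (i (γ 0)) ⟨hγ 0, hi _⟩, hagree j (i (γ 1)) ⟨hγ 1, hi _⟩]

end IsPathCocycle

end Primitives

section CechCocycles

variable {X M ι : Type*} [AddCommGroup M] {U : ι → Set X} {c : ι → ι → M}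

/-- `c` is a Čech `1`-cocycle of the family `U` with coefficients in the constant sheaf `M`, each
`c i j` being constant on `U i ∩ U j`. -/
def IsCechCocycle (U : ι → Set X) (c : ι → ι → M) : Prop :=
  ∀ i j l, (U i ∩ U j ∩ U l).Nonempty → c i j + c j l = c i l

namespace IsCechCocycle

theorem self_eq_zero (hc : IsCechCocycle U c) {i : ι} (hi : (U i).Nonempty) : c i i = 0 :=
  add_eq_left.1 (hc i i i (by simpa using hi))

variable [TopologicalSpace X] [TopologicalSpace M] [DiscreteTopology M]

/-- The principal bundle with discrete fibre `M` whose transition functions are the translations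
by the values of a Čech cocycle. -/
noncomputable def bundleCore (hc : IsCechCocycle U c) (hopen : ∀ i, IsOpen (U i))
    (hcover : ⋃ i, U i = Set.univ) : FiberBundleCore ι X M where
  baseSet := U
  isOpen_baseSet := hopen
  indexAt x := (Set.iUnion_eq_univ_iff.1 hcover x).choose
  mem_baseSet_at x := (Set.iUnion_eq_univ_iff.1 hcover x).choose_spec
  coordChange i j _ v := v + c i j
  coordChange_self i x hx v := by rw [hc.self_eq_zero ⟨x, hx⟩, add_zero]
  continuousOn_coordChange _ _ :=
    ((continuous_of_discreteTopology (f := fun v ↦ v + _)).comp continuous_snd).continuousOn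
  coordChange_comp i j l x hx v := by rw [add_assoc, hc i j l ⟨x, hx⟩]

variable {hc : IsCechCocycle U c} {hopen : ∀ i, IsOpen (U i)} {hcover : ⋃ i, U i = Set.univ}

/-- The fibre coordinate of a point of the bundle, read in the chart indexed by `indexAt` of its
base point. It is not continuous: the chart jumps with the base point. -/
def fibreCoord (e : (hc.bundleCore hopen hcover).TotalSpace) : M := e.2

theorem fibreCoord_eq (i : ι) (e : (hc.bundleCore hopen hcover).TotalSpace) :
    fibreCoord e = ((hc.bundleCore hopen hcover).localTriv i e).2 -
      c ((hc.bundleCore hopen hcover).indexAt e.proj) i :=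
  (add_sub_cancel_right (fibreCoord e) _).symm

theorem continuousAt_localTriv_snd {Γ : C(I, (hc.bundleCore hopen hcover).TotalSpace)} {t : I}
    {i : ι} (ht : (Γ t).proj ∈ U i) :
    ContinuousAt (fun s ↦ ((hc.bundleCore hopen hcover).localTriv i (Γ s)).2) t :=
  (((hc.bundleCore hopen hcover).localTriv i).continuousAt (x := Γ t)
    (((hc.bundleCore hopen hcover).mem_localTriv_source i _).2 ht)).snd.comp
      Γ.continuous.continuousAt

theorem fibreCoord_sub_eq_of_proj_eq {Γ Γ' : C(I, (hc.bundleCore hopen hcover).TotalSpace)}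
    (h : ∀ t, (Γ t).proj = (Γ' t).proj) :
    fibreCoord (Γ 1) - fibreCoord (Γ 0) = fibreCoord (Γ' 1) - fibreCoord (Γ' 0) := by
  let Z := hc.bundleCore hopen hcover
  let d : I → M := fun t ↦ fibreCoord (Γ t) - fibreCoord (Γ' t)
  have hd (i : ι) : d = fun t ↦ (Z.localTriv i (Γ t)).2 - (Z.localTriv i (Γ' t)).2 := by
    funext t
    simp only [d, fibreCoord_eq i, h t, sub_sub_sub_cancel_right, Z]
  have hcont : Continuous d := continuous_iff_continuousAt.2 fun t ↦ by
    obtain ⟨i, hi⟩ := Set.iUnion_eq_univ_iff.1 hcover (Γ t).proj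
    rw [hd i]
    exact (continuousAt_localTriv_snd hi).sub (continuousAt_localTriv_snd (h t ▸ hi))
  rw [← sub_eq_zero, sub_sub_sub_comm, sub_eq_zero]
  exact PreconnectedSpace.constant inferInstance hcont

theorem fibreCoord_sub_eq_of_proj_mem {Γ : C(I, (hc.bundleCore hopen hcover).TotalSpace)} {i : ι}
    (h : ∀ t, (Γ t).proj ∈ U i) :
    fibreCoord (Γ 1) - fibreCoord (Γ 0) =
      c ((hc.bundleCore hopen hcover).indexAt (Γ 0).proj) i -
        c ((hc.bundleCore hopen hcover).indexAt (Γ 1).proj) i := by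
  have hconst : ((hc.bundleCore hopen hcover).localTriv i (Γ 1)).2 =
      ((hc.bundleCore hopen hcover).localTriv i (Γ 0)).2 :=
    PreconnectedSpace.constant inferInstance <| continuous_iff_continuousAt.2 fun t ↦
      continuousAt_localTriv_snd (h t)
  rw [fibreCoord_eq i, fibreCoord_eq i, hconst, sub_sub_sub_cancel_left]

variable (hc hopen hcover)

theorem isCoveringMap_proj : IsCoveringMap (hc.bundleCore hopen hcover).proj :=
  FiberBundle.isCoveringMap (F := M) (E := (hc.bundleCore hopen hcover).Fiber)

/-- The increment of the fibre coordinate along the lift of a path to the bundle of a Čech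
cocycle, the lift starting at fibre coordinate `0` being chosen. -/
noncomputable def monodromy (γ : C(I, X)) : M :=
  fibreCoord ((hc.isCoveringMap_proj hopen hcover).liftPath γ ⟨γ 0, (0 : M)⟩ rfl 1)

variable {hc hopen hcover}

theorem monodromy_eq_fibreCoord_sub {γ : C(I, X)}
    {Γ : C(I, (hc.bundleCore hopen hcover).TotalSpace)} (h : ∀ t, (Γ t).proj = γ t) :
    hc.monodromy hopen hcover γ = fibreCoord (Γ 1) - fibreCoord (Γ 0) := by
  have hcov := hc.isCoveringMap_proj hopen hcover
  rw [fibreCoord_sub_eq_of_proj_eq (Γ' := hcov.liftPath γ ⟨γ 0, (0 : M)⟩ rfl) fun t ↦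
    (h t).trans (congrFun (hcov.liftPath_lifts ..) t).symm, hcov.liftPath_zero]
  exact (sub_zero _).symm

theorem monodromy_eq_fibreCoord_liftPath_sub (γ : C(I, X))
    (e : (hc.bundleCore hopen hcover).TotalSpace) (he : γ 0 = e.proj) :
    hc.monodromy hopen hcover γ =
      fibreCoord ((hc.isCoveringMap_proj hopen hcover).liftPath γ e he 1) - fibreCoord e := by
  have hcov := hc.isCoveringMap_proj hopen hcover
  rw [monodromy_eq_fibreCoord_sub (congrFun (hcov.liftPath_lifts γ e he)), hcov.liftPath_zero]

theorem isPathCocycle_monodromy : IsPathCocycle (hc.monodromy hopen hcover) := by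
  have hcov := hc.isCoveringMap_proj hopen hcover
  refine isPathCocycle_of_map_trans_of_homotopic (fun {x y z} γ γ' ↦ ?_) fun {x y γ γ'} h ↦ ?_
  · obtain ⟨e, rfl⟩ : ∃ e, (hc.bundleCore hopen hcover).proj e = x := ⟨⟨x, (0 : M)⟩, rfl⟩
    have hmid : γ' 0 = (hcov.liftPath γ e γ.source 1).proj :=
      γ'.source.trans (γ.target.symm.trans (congrFun (hcov.liftPath_lifts γ e γ.source) 1).symm)
    have hend : hcov.liftPath (γ.trans γ') e (γ.trans γ').source 1 =
        hcov.liftPath γ' (hcov.liftPath γ e γ.source 1) hmid 1 :=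
      congr($(hcov.liftPath_trans rfl γ γ') 1).trans (Path.target _)
    rw [monodromy_eq_fibreCoord_liftPath_sub (γ.trans γ' : C(I, X)) e (γ.trans γ').source, hend,
      monodromy_eq_fibreCoord_liftPath_sub (γ : C(I, X)) e γ.source,
      monodromy_eq_fibreCoord_liftPath_sub (γ' : C(I, X)) _ hmid, add_comm, sub_add_sub_cancel]
  · obtain ⟨e, rfl⟩ : ∃ e, (hc.bundleCore hopen hcover).proj e = x := ⟨⟨x, (0 : M)⟩, rfl⟩
    rw [monodromy_eq_fibreCoord_liftPath_sub (γ : C(I, X)) e γ.source,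
      monodromy_eq_fibreCoord_liftPath_sub (γ' : C(I, X)) e γ'.source]
    exact congr(fibreCoord $(hcov.liftPath_apply_one_eq_of_homotopicRel h e γ.source γ'.source) -
      fibreCoord e)

theorem isPrimitiveOn_monodromy (i : ι) :
    IsPrimitiveOn (fun x ↦ -c ((hc.bundleCore hopen hcover).indexAt x) i)
      (hc.monodromy hopen hcover) (U i) := by
  intro γ hγ
  have hcov := hc.isCoveringMap_proj hopen hcover
  have hΓ := congrFun (hcov.liftPath_lifts γ ⟨γ 0, (0 : M)⟩ rfl)
  rw [monodromy_eq_fibreCoord_sub hΓ, fibreCoord_sub_eq_of_proj_mem fun t ↦ (hΓ t).symm ▸ hγ t,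
    ← neg_sub_neg]
  exact congr(-c (FiberBundleCore.indexAt _ $(hΓ 1)) i - -c (FiberBundleCore.indexAt _ $(hΓ 0)) i)

end IsCechCocycle

theorem exists_isPathCocycle_of_isCechCocycle [TopologicalSpace X] (hc : IsCechCocycle U c)
    (hopen : ∀ i, IsOpen (U i)) (hcover : ⋃ i, U i = Set.univ) :
    ∃ (F : C(I, X) → M) (g : ι → X → M), IsPathCocycle F ∧ (∀ i, IsPrimitiveOn (g i) F (U i)) ∧
      ∀ i j, ∀ x ∈ U i ∩ U j, g i x - g j x = c i j := by
  let _ : TopologicalSpace M := ⊥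
  have : DiscreteTopology M := ⟨rfl⟩
  refine ⟨hc.monodromy hopen hcover, _, IsCechCocycle.isPathCocycle_monodromy,
    IsCechCocycle.isPrimitiveOn_monodromy, fun i j x hx ↦ ?_⟩
  have hmem := (hc.bundleCore hopen hcover).mem_baseSet_at x
  rw [neg_sub_neg, sub_eq_iff_eq_add', hc _ i j ⟨x, ⟨hmem, hx.1⟩, hx.2⟩]

end CechCocycles

section CrossDifference

variable (k : Type*) [CommRing k] {K L : Type*} (i₀ : K) (j₀ : L)

/-- The mixed second difference of a function on `K × L` with respect to base indices `i₀`, `j₀`. -/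
def crossDifference : (K → L → k) →ₗ[k] {i // i ≠ i₀} × {j // j ≠ j₀} → k where
  toFun w p := w p.1 p.2 - w i₀ p.2 - w p.1 j₀ + w i₀ j₀
  map_add' w w' := by
    ext p
    simp only [Pi.add_apply]
    ring
  map_smul' c w := by
    ext p
    simp only [Pi.smul_apply, smul_eq_mul, RingHom.id_apply]
    ring

variable {k i₀ j₀}

theorem crossDifference_eq_zero_iff {w : K → L → k} :
    crossDifference k i₀ j₀ w = 0 ↔ ∃ (u : K → k) (v : L → k), ∀ i j, w i j = u i + v j := by
  refine ⟨fun hw ↦ ⟨fun i ↦ w i j₀ - w i₀ j₀, fun j ↦ w i₀ j, fun i j ↦ ?_⟩, ?_⟩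
  · rcases eq_or_ne i i₀ with rfl | hi
    · ring
    rcases eq_or_ne j j₀ with rfl | hj
    · ring
    have hij : w i j - w i₀ j - w i j₀ + w i₀ j₀ = 0 := congrFun hw (⟨i, hi⟩, ⟨j, hj⟩)
    linear_combination hij
  · rintro ⟨u, v, huv⟩
    ext p
    simp only [crossDifference, LinearMap.coe_mk, AddHom.coe_mk, huv, Pi.zero_apply]
    ring

theorem crossDifference_surjective : Function.Surjective (crossDifference k i₀ j₀) := by
  intro v
  classical
  refine ⟨fun i j ↦ if h : i ≠ i₀ ∧ j ≠ j₀ then v (⟨i, h.1⟩, ⟨j, h.2⟩) else 0, ?_⟩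
  ext ⟨⟨i, hi⟩, j, hj⟩
  simp [crossDifference, hi, hj]

theorem finrank_crossDifference_codomain [Nontrivial k] [Finite K] [Finite L] :
    finrank k ({i // i ≠ i₀} × {j // j ≠ j₀} → k) =
      (Nat.card K - 1) * (Nat.card L - 1) := by
  classical
  have := Fintype.ofFinite K
  have := Fintype.ofFinite L
  simp [finrank_fintype_fun_eq_card, Fintype.card_subtype_compl]

end CrossDifference

section BipartiteCovers

variable {X K L : Type*}

/-- An open cover by two families of simply connected sets whose nerve is the complete bipartite
graph on the two families: members of one family are disjoint, and members of different families
have path connected (hence nonempty) intersection. -/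
structure IsCompleteBipartiteCover [TopologicalSpace X] (A : K → Set X) (B : L → Set X) : Prop where
  isOpen_left : ∀ i, IsOpen (A i)
  isOpen_right : ∀ j, IsOpen (B j)
  isSimplyConnected_left : ∀ i, IsSimplyConnected (A i)
  isSimplyConnected_right : ∀ j, IsSimplyConnected (B j)
  disjoint_left : Pairwise fun i i' ↦ Disjoint (A i) (A i')
  disjoint_right : Pairwise fun j j' ↦ Disjoint (B j) (B j')
  isPathConnected_inter : ∀ i j, IsPathConnected (A i ∩ B j)
  cover : ∀ x, (∃ i, x ∈ A i) ∨ ∃ j, x ∈ B j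

/-- The alternating `1`-cochain on the complete bipartite graph with the given values on edges. -/
def bipartiteCochain {M : Type*} [AddCommGroup M] (w : K → L → M) : K ⊕ L → K ⊕ L → M
  | .inl i, .inr j => w i j
  | .inr j, .inl i => -w i j
  | .inl _, .inl _ => 0
  | .inr _, .inr _ => 0

namespace IsCompleteBipartiteCover

variable [TopologicalSpace X] {A : K → Set X} {B : L → Set X}

theorem isOpen_sumElim (h : IsCompleteBipartiteCover A B) (s : K ⊕ L) : IsOpen (Sum.elim A B s) :=
  s.rec h.isOpen_left h.isOpen_right

theorem isSimplyConnected_sumElim (h : IsCompleteBipartiteCover A B) (s : K ⊕ L) :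
    IsSimplyConnected (Sum.elim A B s) :=
  s.rec h.isSimplyConnected_left h.isSimplyConnected_right

theorem iUnion_sumElim (h : IsCompleteBipartiteCover A B) :
    ⋃ s, Sum.elim A B s = Set.univ :=
  Set.iUnion_eq_univ_iff.2 fun x ↦ Sum.exists.2 (h.cover x)

theorem eq_of_mem_left (h : IsCompleteBipartiteCover A B) {x : X} {i i' : K} (hi : x ∈ A i)
    (hi' : x ∈ A i') : i = i' :=
  h.disjoint_left.eq (Set.not_disjoint_iff.2 ⟨x, hi, hi'⟩)

theorem eq_of_mem_right (h : IsCompleteBipartiteCover A B) {x : X} {j j' : L} (hj : x ∈ B j)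
    (hj' : x ∈ B j') : j = j' :=
  h.disjoint_right.eq (Set.not_disjoint_iff.2 ⟨x, hj, hj'⟩)

theorem eqOn_inter_of_eqOn_inter (h : IsCompleteBipartiteCover A B) {M : Type*}
    {f : K ⊕ L → X → M} (hf : ∀ i j, Set.EqOn (f (.inl i)) (f (.inr j)) (A i ∩ B j)) (s t : K ⊕ L) :
    Set.EqOn (f s) (f t) (Sum.elim A B s ∩ Sum.elim A B t) := by
  rintro x ⟨hs, ht⟩
  rcases s with i | j <;> rcases t with i' | j'
  · rw [h.eq_of_mem_left hs ht]
  · exact hf i j' ⟨hs, ht⟩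
  · exact (hf i' j ⟨ht, hs⟩).symm
  · rw [h.eq_of_mem_right hs ht]

theorem isCechCocycle (h : IsCompleteBipartiteCover A B) {M : Type*} [AddCommGroup M]
    (w : K → L → M) : IsCechCocycle (Sum.elim A B) (bipartiteCochain w) := by
  rintro (i | i) (j | j) (l | l) ⟨x, ⟨hi, hj⟩, hl⟩ <;>
    simp only [Sum.elim_inl, Sum.elim_inr] at hi hj hl
  · simp [bipartiteCochain]
  · simp [bipartiteCochain, h.eq_of_mem_left hi hj]
  · simp [bipartiteCochain, h.eq_of_mem_left hi hl]
  · simp [bipartiteCochain, h.eq_of_mem_right hj hl]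
  · simp [bipartiteCochain, h.eq_of_mem_left hj hl]
  · simp [bipartiteCochain, h.eq_of_mem_right hi hl]
  · simp [bipartiteCochain, h.eq_of_mem_right hi hj]
  · simp [bipartiteCochain]

end IsCompleteBipartiteCover

/-- A choice of base points in the members of two families of sets, and of paths joining the base
point of `A i` to that of `B j`, which cross over from `A i` to `B j` at `crossing i j`. -/
structure CrossingPaths [TopologicalSpace X] (A : K → Set X) (B : L → Set X) where
  left : K → X
  right : L → X
  crossing : K → L → X
  toCrossing : ∀ i j, Path (left i) (crossing i j)
  fromCrossing : ∀ i j, Path (crossing i j) (right j)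
  toCrossing_mem : ∀ i j t, toCrossing i j t ∈ A i
  fromCrossing_mem : ∀ i j t, fromCrossing i j t ∈ B j

theorem IsCompleteBipartiteCover.nonempty_crossingPaths [TopologicalSpace X] {A : K → Set X}
    {B : L → Set X} (h : IsCompleteBipartiteCover A B) : Nonempty (CrossingPaths A B) := by
  choose a ha using fun i ↦ (h.isSimplyConnected_left i).nonempty
  choose b hb using fun j ↦ (h.isSimplyConnected_right j).nonempty
  choose x hx using fun i j ↦ (h.isPathConnected_inter i j).nonempty
  choose p hp using fun i j ↦
    (h.isSimplyConnected_left i).isPathConnected.joinedIn _ (ha i) _ (hx i j).1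
  choose q hq using fun i j ↦
    (h.isSimplyConnected_right j).isPathConnected.joinedIn _ (hx i j).2 _ (hb j)
  exact ⟨⟨a, b, x, p, q, hp, hq⟩⟩

namespace CrossingPaths

variable [TopologicalSpace X] {A : K → Set X} {B : L → Set X} (c : CrossingPaths A B)

/-- The values of a path function on the crossing paths. -/
noncomputable def periods (k : Type*) [CommRing k] : (C(I, X) → k) →ₗ[k] K → L → k where
  toFun F i j := F ((c.toCrossing i j).trans (c.fromCrossing i j))
  map_add' _ _ := rfl
  map_smul' _ _ := rfl

variable {k : Type*} [CommRing k] {F : C(I, X) → k} {g : K ⊕ L → X → k}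

theorem periods_apply (hF : IsPathCocycle F)
    (hg : ∀ s, IsPrimitiveOn (g s) F (Sum.elim A B s)) (i : K) (j : L) :
    c.periods k F i j = (g (.inl i) (c.crossing i j) - g (.inr j) (c.crossing i j)) +
      (g (.inr j) (c.right j) - g (.inl i) (c.left i)) := by
  change F ((c.toCrossing i j).trans (c.fromCrossing i j)) = _
  rw [hF.map_trans, (hg (.inl i)).map_path _ (c.toCrossing_mem i j),
    (hg (.inr j)).map_path _ (c.fromCrossing_mem i j)]
  ring

theorem crossing_mem (i : K) (j : L) : c.crossing i j ∈ A i ∩ B j :=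
  ⟨(c.toCrossing i j).target ▸ c.toCrossing_mem i j 1,
    (c.fromCrossing i j).source ▸ c.fromCrossing_mem i j 0⟩

variable {i₀ : K} {j₀ : L}

theorem crossDifference_periods_eq_zero (hF : F ∈ pathCoboundaries k X) :
    crossDifference k i₀ j₀ (c.periods k F) = 0 := by
  obtain ⟨g, hg⟩ := hF
  refine crossDifference_eq_zero_iff.2 ⟨fun i ↦ -g (c.left i), fun j ↦ g (c.right j), fun i j ↦ ?_⟩
  have hprimitive : IsPrimitiveOn g F Set.univ := fun γ _ ↦ hg γ
  exact (hprimitive.map_path _ fun _ ↦ Set.mem_univ _).trans (sub_eq_neg_add _ _)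

theorem mem_pathCoboundaries_of_crossDifference_periods_eq_zero
    (h : IsCompleteBipartiteCover A B) (hF : IsPathCocycle F)
    (hzero : crossDifference k i₀ j₀ (c.periods k F) = 0) : F ∈ pathCoboundaries k X := by
  obtain ⟨u, v, huv⟩ := crossDifference_eq_zero_iff.1 hzero
  choose g hg using fun s ↦ hF.exists_isPrimitiveOn (h.isSimplyConnected_sumElim s)
  let offset : K ⊕ L → k :=
    Sum.elim (fun i ↦ g (.inl i) (c.left i) + u i) (fun j ↦ g (.inr j) (c.right j) - v j)
  have hagree (i : K) (j : L) : Set.EqOn (fun x ↦ g (.inl i) x - offset (.inl i))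
      (fun x ↦ g (.inr j) x - offset (.inr j)) (A i ∩ B j) := fun x hx ↦ by
    have hdiff := ((hg (.inl i)).mono Set.inter_subset_left).sub_eq_sub
      ((hg (.inr j)).mono Set.inter_subset_right) (h.isPathConnected_inter i j) hx
      (c.crossing_mem i j)
    have hperiod := (c.periods_apply hF hg i j).symm.trans (huv i j)
    simp only [offset, Sum.elim_inl, Sum.elim_inr]
    linear_combination hdiff + hperiod
  obtain ⟨f, hf⟩ := hF.exists_isPrimitiveOn_univ_of_openCover h.isOpen_sumElim h.iUnion_sumElim
    (fun s ↦ (hg s).sub_const (offset s)) (h.eqOn_inter_of_eqOn_inter hagree)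
  exact ⟨f, fun γ ↦ hf γ fun t ↦ Set.mem_univ _⟩

theorem exists_isPathCocycle_crossDifference_periods_eq (h : IsCompleteBipartiteCover A B)
    (v : {i // i ≠ i₀} × {j // j ≠ j₀} → k) :
    ∃ F : C(I, X) → k, IsPathCocycle F ∧ crossDifference k i₀ j₀ (c.periods k F) = v := by
  obtain ⟨w, rfl⟩ := crossDifference_surjective v
  obtain ⟨F, g, hF, hg, hgw⟩ :=
    exists_isPathCocycle_of_isCechCocycle (h.isCechCocycle w) h.isOpen_sumElim h.iUnion_sumElim
  refine ⟨F, hF, sub_eq_zero.1 ?_⟩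
  rw [← map_sub]
  refine crossDifference_eq_zero_iff.2
    ⟨fun i ↦ -g (.inl i) (c.left i), fun j ↦ g (.inr j) (c.right j), fun i j ↦ ?_⟩
  have hw : _ = w i j := hgw (.inl i) (.inr j) _ (c.crossing_mem i j)
  rw [Pi.sub_apply, Pi.sub_apply, c.periods_apply hF hg, hw]
  ring

end CrossingPaths

theorem IsCompleteBipartiteCover.finrank_pathCocycles_quotient [TopologicalSpace X] {A : K → Set X}
    {B : L → Set X} (h : IsCompleteBipartiteCover A B) [Finite K] [Finite L] [Nonempty K]
    [Nonempty L] (k : Type*) [CommRing k] [Nontrivial k] :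
    finrank k (pathCocycles k X ⧸ (pathCoboundaries k X).submoduleOf (pathCocycles k X)) =
      (Nat.card K - 1) * (Nat.card L - 1) := by
  obtain ⟨c⟩ := h.nonempty_crossingPaths
  let i₀ := Classical.arbitrary K
  let j₀ := Classical.arbitrary L
  let D := crossDifference k i₀ j₀ ∘ₗ c.periods k ∘ₗ (pathCocycles k X).subtype
  have hker : LinearMap.ker D = (pathCoboundaries k X).submoduleOf (pathCocycles k X) := by
    ext F
    exact ⟨c.mem_pathCoboundaries_of_crossDifference_periods_eq_zero h F.2,
      c.crossDifference_periods_eq_zero⟩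
  have hsurj : Function.Surjective D := fun v ↦
    have ⟨F, hF, hFv⟩ := c.exists_isPathCocycle_crossDifference_periods_eq h v
    ⟨⟨F, hF⟩, hFv⟩
  rw [← hker, (D.quotKerEquivOfSurjective hsurj).finrank_eq, finrank_crossDifference_codomain]

end BipartiteCovers

section RootBranches

variable {n : ℕ}

/-- The branch over `0 < Re u` of the `n`-th root of `u` whose value at `1` is `ζ`. -/
noncomputable def nthRootBranch (ζ : rootsOfUnity n ℂ) (u : ℂ) : ℂ :=
  (ζ : ℂˣ) * u ^ (n : ℂ)⁻¹

theorem continuousOn_nthRootBranch (ζ : rootsOfUnity n ℂ) :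
    ContinuousOn (nthRootBranch ζ) {u | 0 < u.re} :=
  continuousOn_const.mul (continuousOn_id.cpow_const fun _ hu ↦ .inl hu)

/-- The sector of points `z` with `0 < Re (z ^ n)` around the `n`-th root of unity `ζ`, that is, the
image of the half-plane `0 < Re u` under `nthRootBranch ζ`. -/
def rootSector (ζ : rootsOfUnity n ℂ) : Set ℂ :=
  {z | 0 < (z ^ n).re ∧ nthRootBranch ζ (z ^ n) = z}

theorem disjoint_rootSector :
    Pairwise fun ζ ξ : rootsOfUnity n ℂ ↦ Disjoint (rootSector ζ) (rootSector ξ) := by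
  refine fun ζ ξ hne ↦ Set.disjoint_left.2 fun z hζ hξ ↦ hne ?_
  have hmul : nthRootBranch ζ (z ^ n) = nthRootBranch ξ (z ^ n) := hζ.2.trans hξ.2.symm
  have hw : (z ^ n) ^ (n : ℂ)⁻¹ ≠ 0 :=
    Complex.cpow_ne_zero_iff.2 (.inl (Complex.ne_zero_of_re_pos hζ.1))
  exact Subtype.ext (Units.ext (mul_right_cancel₀ hw hmul))

variable [NeZero n]

theorem nthRootBranch_pow (ζ : rootsOfUnity n ℂ) (u : ℂ) : nthRootBranch ζ u ^ n = u := by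
  rw [nthRootBranch, mul_pow, Complex.cpow_nat_inv_pow u (NeZero.ne n),
    (mem_rootsOfUnity' n _).1 ζ.2, one_mul]

theorem nthRootBranch_mem_rootSector (ζ : rootsOfUnity n ℂ) {u : ℂ} (hu : 0 < u.re) :
    nthRootBranch ζ u ∈ rootSector ζ := by
  rw [rootSector, Set.mem_ofPred_eq, nthRootBranch_pow]
  exact ⟨hu, rfl⟩

theorem exists_mem_rootSector {z : ℂ} (hz : 0 < (z ^ n).re) :
    ∃ ζ : rootsOfUnity n ℂ, z ∈ rootSector ζ := by
  have hw : z ^ n ≠ 0 := Complex.ne_zero_of_re_pos hz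
  have hroot : (z / (z ^ n) ^ (n : ℂ)⁻¹) ^ n = 1 := by
    rw [div_pow, Complex.cpow_nat_inv_pow _ (NeZero.ne n), div_self hw]
  refine ⟨rootsOfUnity.mkOfPowEq _ hroot, hz, ?_⟩
  rw [nthRootBranch, rootsOfUnity.val_mkOfPowEq_coe,
    div_mul_cancel₀ _ (Complex.cpow_ne_zero_iff.2 (.inl hw))]

theorem isOpen_rootSector (ζ : rootsOfUnity n ℂ) : IsOpen (rootSector ζ) := by
  have hopen : IsOpen {z : ℂ | 0 < (z ^ n).re} := isOpen_lt (by fun_prop) (by fun_prop)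
  refine isOpen_iff_mem_nhds.2 fun z hz ↦ ?_
  have hpos : ∀ᶠ w : ℂ in 𝓝 z, 0 < (w ^ n).re := hopen.mem_nhds hz.1
  have hother : ∀ᶠ w in 𝓝 z, ∀ ξ : rootsOfUnity n ℂ, ξ ≠ ζ → nthRootBranch ξ (w ^ n) ≠ w := by
    refine Filter.eventually_all.2 fun ξ ↦ Filter.eventually_imp_distrib_left.2 fun hξ ↦ ?_
    have hcont : ContinuousAt (fun w : ℂ ↦ nthRootBranch ξ (w ^ n)) z :=
      ((continuousOn_nthRootBranch ξ).comp (continuous_pow n).continuousOn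
        fun _ hw ↦ hw).continuousAt (hopen.mem_nhds hz.1)
    exact (hcont.ne_iff_eventually_ne continuousAt_id).1 fun h ↦
      Set.disjoint_left.1 (disjoint_rootSector hξ) ⟨hz.1, h⟩ hz
  filter_upwards [hpos, hother] with w hw hne
  obtain ⟨ξ, hξ⟩ := exists_mem_rootSector hw
  rcases eq_or_ne ξ ζ with rfl | hξζ
  · exact hξ
  · exact (hne ξ hξζ hξ.2).elim

end RootBranches

section FermatFibre

variable {n : ℕ}

/-- The chart of the Fermat fibre consisting of the points whose second coordinate lies in the
sector around `ζ`; it is the graph over `Re (y ^ n) < 1` of a branch of `(1 - y ^ n) ^ (1 / n)`. -/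
def rightSector (ζ : rootsOfUnity n ℂ) : Set (FermatFibre n) :=
  {p | p.1.2 ∈ rootSector ζ}

/-- The involution `(y, z) ↦ (z, y)` of the Fermat fibre. -/
noncomputable def fermatSwap (n : ℕ) : FermatFibre n ≃ₜ FermatFibre n :=
  (Homeomorph.prodComm ℂ ℂ).subtype fun v ↦ by
    rw [Homeomorph.coe_prodComm, Prod.fst_swap, Prod.snd_swap, add_comm]

/-- The chart of the Fermat fibre consisting of the points whose first coordinate lies in the
sector around `ξ`. -/
def leftSector (ξ : rootsOfUnity n ℂ) : Set (FermatFibre n) :=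
  fermatSwap n ⁻¹' rightSector ξ

theorem disjoint_rightSector :
    Pairwise fun ζ ξ : rootsOfUnity n ℂ ↦ Disjoint (rightSector ζ) (rightSector ξ) :=
  disjoint_rootSector.mono fun _ _ h ↦ h.preimage _

theorem isOpen_rightSector [NeZero n] (ζ : rootsOfUnity n ℂ) : IsOpen (rightSector ζ) :=
  (isOpen_rootSector ζ).preimage (by fun_prop)

theorem contractibleSpace_re_pow_lt_one (n : ℕ) [NeZero n] :
    ContractibleSpace {y : ℂ | (y ^ n).re < 1} := by
  have hhalf : StarConvex ℝ 0 {u : ℂ | u.re < 1} :=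
    (convex_halfSpace_re_lt 1).starConvex (Complex.zero_re.trans_lt one_pos)
  have hstar : StarConvex ℝ 0 {y : ℂ | (y ^ n).re < 1} := by
    refine starConvex_zero_iff.2 fun y hy a ha₀ ha₁ ↦ ?_
    rw [Set.mem_ofPred_eq, smul_pow]
    exact starConvex_zero_iff.1 hhalf hy (pow_nonneg ha₀ n) (pow_le_one₀ ha₀ ha₁)
  exact hstar.contractibleSpace ⟨0, by simp [NeZero.ne n]⟩

theorem re_fst_pow_add_re_snd_pow (p : FermatFibre n) : (p.1.1 ^ n).re + (p.1.2 ^ n).re = 1 :=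
  congrArg Complex.re p.2

theorem re_fst_pow_lt_one {ζ : rootsOfUnity n ℂ} {p : FermatFibre n} (hp : p ∈ rightSector ζ) :
    (p.1.1 ^ n).re < 1 := by
  have hsum := re_fst_pow_add_re_snd_pow p
  linarith [hp.1]

theorem nthRootBranch_one_sub_fst_pow {ζ : rootsOfUnity n ℂ} {p : FermatFibre n}
    (hp : p ∈ rightSector ζ) : nthRootBranch ζ (1 - p.1.1 ^ n) = p.1.2 := by
  have hsub : 1 - p.1.1 ^ n = p.1.2 ^ n := sub_eq_of_eq_add' p.2.symm
  rw [hsub]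
  exact hp.2

/-- The parametrization of a chart `rightSector ζ` by the first coordinate. -/
noncomputable def rightSectorHomeomorph [NeZero n] (ζ : rootsOfUnity n ℂ) :
    {y : ℂ | (y ^ n).re < 1} ≃ₜ rightSector ζ where
  toFun y := ⟨⟨(y, nthRootBranch ζ (1 - y ^ n)), by rw [nthRootBranch_pow, add_sub_cancel]⟩,
    nthRootBranch_mem_rootSector ζ (sub_pos.2 y.2)⟩
  invFun p := ⟨p.1.1.1, re_fst_pow_lt_one p.2⟩
  left_inv _ := rfl
  right_inv p := Subtype.ext (Subtype.ext (Prod.ext rfl (nthRootBranch_one_sub_fst_pow p.2)))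
  continuous_toFun := by
    have hbranch : Continuous fun y : {y : ℂ | (y ^ n).re < 1} ↦ nthRootBranch ζ (1 - y ^ n) :=
      (continuousOn_nthRootBranch ζ).comp_continuous (by fun_prop) fun y ↦
        (sub_pos.2 y.2 : 0 < 1 - ((y : ℂ) ^ n).re)
    fun_prop
  continuous_invFun := by fun_prop

theorem isSimplyConnected_rightSector [NeZero n] (ζ : rootsOfUnity n ℂ) :
    IsSimplyConnected (rightSector ζ) :=
  have := contractibleSpace_re_pow_lt_one n
  have := (rightSectorHomeomorph ζ).symm.contractibleSpace
  SimplyConnectedSpace.ofContractible (rightSector ζ)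

theorem isPathConnected_leftSector_inter_rightSector [NeZero n] (ξ ζ : rootsOfUnity n ℂ) :
    IsPathConnected (leftSector ξ ∩ rightSector ζ) := by
  let strip : Set ℂ := {u | 0 < u.re ∧ u.re < 1}
  have hconvex : Convex ℝ strip := (convex_halfSpace_re_gt 0).inter (convex_halfSpace_re_lt 1)
  have : PathConnectedSpace strip := isPathConnected_iff_pathConnectedSpace.1
    (hconvex.isPathConnected ⟨(1 / 2 : ℝ), by norm_num [strip]⟩)
  let f : strip → FermatFibre n := fun u ↦
    ⟨(nthRootBranch ξ u, nthRootBranch ζ (1 - u)), by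
      rw [nthRootBranch_pow, nthRootBranch_pow, add_sub_cancel]⟩
  have hleft : Continuous fun u : strip ↦ nthRootBranch ξ u :=
    (continuousOn_nthRootBranch ξ).comp_continuous (by fun_prop) fun u ↦ u.2.1
  have hright : Continuous fun u : strip ↦ nthRootBranch ζ (1 - u) :=
    (continuousOn_nthRootBranch ζ).comp_continuous (by fun_prop) fun u ↦
      (sub_pos.2 u.2.2 : 0 < 1 - (u : ℂ).re)
  have hf : Continuous f := by fun_prop
  have hrange : Set.range f = leftSector ξ ∩ rightSector ζ := by
    refine Set.Subset.antisymm (Set.range_subset_iff.2 fun u ↦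
      ⟨nthRootBranch_mem_rootSector ξ u.2.1,
        nthRootBranch_mem_rootSector ζ (sub_pos.2 u.2.2)⟩) ?_
    rintro p ⟨hy, hz⟩
    exact ⟨⟨p.1.1 ^ n, hy.1, re_fst_pow_lt_one hz⟩,
      Subtype.ext (Prod.ext hy.2 (nthRootBranch_one_sub_fst_pow hz))⟩
  exact hrange ▸ isPathConnected_range hf

theorem exists_mem_leftSector_or_exists_mem_rightSector [NeZero n] (p : FermatFibre n) :
    (∃ ξ, p ∈ leftSector ξ) ∨ ∃ ζ, p ∈ rightSector ζ := by
  have hpos : 0 < (p.1.1 ^ n).re ∨ 0 < (p.1.2 ^ n).re := by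
    by_contra! hnonpos
    linarith [re_fst_pow_add_re_snd_pow p]
  exact hpos.imp exists_mem_rootSector exists_mem_rootSector

theorem isCompleteBipartiteCover_sectors (n : ℕ) [NeZero n] :
    IsCompleteBipartiteCover (leftSector (n := n)) (rightSector (n := n)) where
  isOpen_left ξ := (isOpen_rightSector ξ).preimage (fermatSwap n).continuous
  isOpen_right := isOpen_rightSector
  isSimplyConnected_left ξ :=
    (fermatSwap n).isSimplyConnected_preimage.2 (isSimplyConnected_rightSector ξ)
  isSimplyConnected_right := isSimplyConnected_rightSector
  disjoint_left := disjoint_rightSector.mono fun _ _ h ↦ h.preimage (fermatSwap n)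
  disjoint_right := disjoint_rightSector
  isPathConnected_inter := isPathConnected_leftSector_inter_rightSector
  cover := exists_mem_leftSector_or_exists_mem_rightSector

end FermatFibre

theorem statement9 (n : ℕ) (hn : 1 ≤ n) :
    Module.finrank ℂ (H1.obj (TopCat.of (FermatFibre n))) = (n - 1) ^ 2 := by
  have : NeZero n := ⟨Nat.one_le_iff_ne_zero.1 hn⟩
  rw [finrank_H1_eq_finrank_pathCocycles_quotient,
    (isCompleteBipartiteCover_sectors n).finrank_pathCocycles_quotient ℂ,
    Complex.card_rootsOfUnity, sq]
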